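/- For every ε > 0 there exists θ > 0 with the following property. Let A be a real 2×2 matrix with determinant 1 whose characteristic multipliers are real with absolute value different from 1 (A hyperbolic), with unit eigenvectors u and v corresponding to the eigenvalues λ and λ⁻¹ respectively, and suppose the angle between the eigendirections ℝu and ℝv is less than θ (i.e. |⟨u, v⟩| > cos θ). Then there exists α with |α| < ε such that R_α A is elliptic, i.e. |tr(R_α A)| < 2, where R_α = [[cos α, −sin α],[sin α, cos α]] is the rotation by α. -/

import Mathlib

open Matrix Real

theorem core_aux (T S θ : ℝ) (hθ : 0 < θ) (hT : 0 < T)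
    (h : T * cos θ - |S| * sin θ < 2) :
    ∃ α : ℝ, |α| ≤ θ ∧ |T * cos α + S * sin α| < 2 := by
  obtain ⟨β, hβ, hg⟩ : ∃ β ∈ Set.Icc (-θ) θ, T * cos β + S * sin β < 2 := by
    rcases le_total 0 S with hS | hS
    · refine ⟨-θ, ⟨le_refl _, by linarith⟩, ?_⟩
      rw [abs_of_nonneg hS] at h
      rw [cos_neg, sin_neg]; linarith
    · refine ⟨θ, ⟨by linarith, le_refl _⟩, ?_⟩
      rw [abs_of_nonpos hS] at h
      linarith
  by_cases h2 : -2 < T * cos β + S * sin β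
  · exact ⟨β, abs_le.2 hβ, abs_lt.2 ⟨h2, hg⟩⟩
  · have h0 : (0 : ℝ) ∈ Set.Icc (-θ) θ := ⟨by linarith, by linarith⟩
    have hc : ContinuousOn (fun x : ℝ => T * cos x + S * sin x) (Set.Icc (-θ) θ) := by
      fun_prop
    obtain ⟨α, hα, he⟩ := isPreconnected_Icc.intermediate_value hβ h0 hc
      (show (0 : ℝ) ∈ Set.Icc _ _ from ⟨by linarith, by simp; linarith⟩)
    refine ⟨α, abs_le.2 hα, ?_⟩
    simp only at he
    rw [he]; norm_num

theorem core_aux2 (T S θ : ℝ) (hθ : 0 < θ) (hT : T ≠ 0)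
    (h : |T| * cos θ - |S| * sin θ < 2) :
    ∃ α : ℝ, |α| ≤ θ ∧ |T * cos α + S * sin α| < 2 := by
  rcases lt_or_gt_of_ne hT with h' | h'
  · obtain ⟨α, h1, h2⟩ := core_aux (-T) (-S) θ hθ (by linarith)
      (by rw [abs_neg, ← abs_of_neg h']; exact h)
    refine ⟨α, h1, ?_⟩
    rw [← abs_neg]
    convert h2 using 2
    ring
  · exact core_aux T S θ hθ h' (by rw [abs_of_pos h'] at h; exact h)

/-- For every `ε > 0` there exists `θ > 0` with the following
property.  Let `A ∈ SL(2,ℝ)` be hyperbolic (real eigenvalues `λ`, `λ⁻¹` with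
`|λ| ≠ 1`), with unit eigenvectors `u`, `v` for `λ`, `λ⁻¹` respectively, and suppose
the angle between the eigendirections is less than `θ` (i.e. `|⟨u, v⟩| > cos θ`).
Then there exists `α` with `|α| < ε` such that `R_α A` is elliptic, i.e.
`|tr (R_α A)| < 2`, where `R_α` is the rotation by `α`. -/
theorem small_angle_hyperbolic_rotate_to_elliptic :
    ∀ ε > 0, ∃ θ > 0, ∀ (A : Matrix (Fin 2) (Fin 2) ℝ) (lam : ℝ) (u v : Fin 2 → ℝ),
      A.det = 1 → |lam| ≠ 1 →
      u ⬝ᵥ u = 1 → v ⬝ᵥ v = 1 →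
      A.mulVec u = lam • u → A.mulVec v = lam⁻¹ • v →
      |u ⬝ᵥ v| > Real.cos θ →
      ∃ α : ℝ, |α| < ε ∧ |(!![cos α, -sin α; sin α, cos α] * A).trace| < 2 := by
  intro ε hε
  have hθ : 0 < min (ε / 2) 1 := lt_min (by linarith) one_pos
  have hθε : min (ε / 2) 1 < ε := (min_le_left _ _).trans_lt (by linarith)
  have hθ1 : min (ε / 2) 1 ≤ 1 := min_le_right _ _
  generalize min (ε / 2) 1 = θ at hθ hθε hθ1
  refine ⟨θ, hθ, ?_⟩
  intro A lam u v hdet hlam hu hv hAu hAv huv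
  have hpi := Real.pi_gt_three
  have hcos : 0 < cos θ := cos_pos_of_mem_Ioo ⟨by linarith, by linarith⟩
  have hsin : 0 < sin θ := sin_pos_of_pos_of_lt_pi hθ (by linarith)
  have hu0 := congrFun hAu 0
  have hu1 := congrFun hAu 1
  have hv0 := congrFun hAv 0
  have hv1 := congrFun hAv 1
  simp only [Matrix.mulVec, dotProduct, Fin.sum_univ_two, Pi.smul_apply, smul_eq_mul] at hu hv hu0 hu1 hv0 hv1 huv
  rw [Matrix.det_fin_two] at hdet
  simp only [Matrix.trace_fin_two, Matrix.mul_apply, Fin.sum_univ_two]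
  simp
  generalize A 0 0 = a at *
  generalize A 0 1 = b at *
  generalize A 1 0 = c at *
  generalize A 1 1 = d at *
  generalize u 0 = p at *
  generalize u 1 = q at *
  generalize v 0 = r at *
  generalize v 1 = s at *
  have hl0 : lam ≠ 0 := by
    rintro rfl
    have hp : p = 0 := by linear_combination (-p) * hdet + d * hu0 - b * hu1
    have hq : q = 0 := by linear_combination (-q) * hdet + a * hu1 - c * hu0
    simp [hp, hq] at hu
  have hmul : lam * lam⁻¹ = 1 := mul_inv_cancel₀ hl0
  generalize lam⁻¹ = m at *
  have hne : lam - m ≠ 0 := by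
    intro h
    apply hlam
    have : lam ^ 2 = 1 := by linear_combination hmul + lam * h
    rcases eq_or_eq_neg_of_sq_eq_sq lam 1 (by rw [this, one_pow]) with h | h <;> simp [h]
  have hS : (c - b) * (p * s - q * r) = (lam - m) * (p * r + q * s) := by
    linear_combination r * hu0 + s * hu1 - p * hv0 - q * hv1
  have hT' : (a + d) * (p * s - q * r) = (lam + m) * (p * s - q * r) := by
    linear_combination s * hu0 - r * hu1 + p * hv1 - q * hv0
  have hCD : (p * r + q * s) ^ 2 + (p * s - q * r) ^ 2 = 1 := by
    linear_combination (r*r+s*s) * hu + hv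
  have hC2 : cos θ ^ 2 < (p * r + q * s) ^ 2 := by
    rw [← sq_abs (p * r + q * s)]
    exact pow_lt_pow_left₀ huv hcos.le two_ne_zero
  generalize p * r + q * s = C at *
  generalize p * s - q * r = D at *
  have hD : D ≠ 0 := by
    rintro rfl
    have : C = 0 := by
      rcases mul_eq_zero.1 (show (lam - m) * C = 0 by linarith) with h | h
      · exact absurd h hne
      · exact h
    simp [this] at hCD
  have hT : a + d = lam + m := mul_right_cancel₀ hD hT'
  have hsc := sin_sq_add_cos_sq θ
  have hT2 : (a + d) ^ 2 = 4 + (lam - m) ^ 2 := by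
    rw [hT]; linear_combination 4 * hmul
  have hh : 0 < |lam - m| := abs_pos.2 hne
  have key : |lam - m| * cos θ < |c - b| * sin θ := by
    apply lt_of_pow_lt_pow_left₀ 2 (by positivity)
    rw [mul_pow, mul_pow, sq_abs, sq_abs]
    have e : (c - b) ^ 2 * D ^ 2 = (lam - m) ^ 2 * C ^ 2 := by
      rw [← mul_pow, ← mul_pow, hS]
    have h1 : (lam - m) ^ 2 * cos θ ^ 2 < (lam - m) ^ 2 * C ^ 2 :=
      mul_lt_mul_of_pos_left hC2 (by positivity)
    have h2 : (c - b) ^ 2 * D ^ 2 ≤ (c - b) ^ 2 * sin θ ^ 2 :=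
      mul_le_mul_of_nonneg_left (by linarith) (by positivity)
    linarith
  have hTle : |a + d| ≤ 2 + |lam - m| := by
    refine abs_le_of_sq_le_sq ?_ (by positivity)
    rw [hT2, ← sq_abs (lam - m)]
    nlinarith
  obtain ⟨α, h1, h2⟩ := core_aux2 (a + d) (b - c) θ hθ
    (by intro h; rw [h] at hT2; nlinarith [sq_nonneg (lam - m)])
    (by
      rw [abs_sub_comm b c]
      have := mul_le_mul_of_nonneg_right hTle hcos.le
      have := cos_le_one θ
      linarith)
  refine ⟨α, by linarith, ?_⟩
  convert h2 using 2
  ring
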